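/- arXiv:1909.07864 — 2 statements merged into one kernel-verified Lean document; each statement's English description precedes it below -/
import Mathlib

section
/- Let P be a real symmetric positive definite m×m matrix, let Q be a real symmetric positive semidefinite k×k matrix and G a real symmetric positive semidefinite l×l matrix, and let B_τ be a real k×m matrix and B_c a real l×m matrix, each with trivial kernel (B_τ x = 0 ⟹ x = 0 and B_c x = 0 ⟹ x = 0). Then tr((B_τᵀ Q B_τ + B_cᵀ G B_c) P) ≥ (λ_min(Q) λ_min(B_τᵀ B_τ) + λ_min(G) λ_min(B_cᵀ B_c)) · tr(P), where λ_min(·) denotes the smallest eigenvalue of a real symmetric matrix. -/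
open Matrix

/-!
Bound each of the two terms `tr(Bᴴ Q B P)` separately, by monotonicity in the Loewner order.
Conjugating `λ_min(Q) • 1 ≤ Q` by `B` gives `λ_min(Q) • Bᴴ B ≤ Bᴴ Q B`, and tracing against
`P ≥ 0` preserves this inequality. Since `λ_min(Q) ≥ 0`, one may then use
`λ_min(Bᴴ B) • 1 ≤ Bᴴ B` and trace against `P` again.
-/

section LoewnerBounds

open scoped ComplexOrder MatrixOrder

variable {𝕜 m n : Type*} [RCLike 𝕜] [Fintype n]

/-- The smallest eigenvalue `λ_min(A)` of a Hermitian matrix `A`. For a `0 × 0` matrix, the infimum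
over the empty family is the junk value `0`. -/
noncomputable def minEigenvalue [DecidableEq n] {A : Matrix n n 𝕜} (hA : A.IsHermitian) : ℝ :=
  ⨅ i, hA.eigenvalues i

lemma minEigenvalue_le_eigenvalues [DecidableEq n] {A : Matrix n n 𝕜} (hA : A.IsHermitian) (i : n) :
    minEigenvalue hA ≤ hA.eigenvalues i :=
  ciInf_le (Set.finite_range _).bddBelow i

lemma minEigenvalue_nonneg [DecidableEq n] {A : Matrix n n 𝕜} (hA : A.PosSemidef) :
    0 ≤ minEigenvalue hA.isHermitian :=
  Real.iInf_nonneg hA.eigenvalues_nonneg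

lemma minEigenvalue_smul_one_le [DecidableEq n] {A : Matrix n n 𝕜} (hA : A.IsHermitian) :
    minEigenvalue hA • (1 : Matrix n n 𝕜) ≤ A := by
  rw [← Algebra.algebraMap_eq_smul_one]
  refine algebraMap_le_of_le_spectrum (ha := hA.isSelfAdjoint) fun x hx ↦ ?_
  obtain ⟨i, rfl⟩ := hA.spectrum_real_eq_range_eigenvalues ▸ hx
  exact minEigenvalue_le_eigenvalues hA i

lemma minEigenvalue_smul_conjTranspose_mul_self_le [Finite m] [DecidableEq n]
    {Q : Matrix n n 𝕜} (hQ : Q.IsHermitian) (B : Matrix n m 𝕜) :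
    minEigenvalue hQ • (Bᴴ * B) ≤ Bᴴ * Q * B := by
  have h := (le_iff.mp (minEigenvalue_smul_one_le hQ)).conjTranspose_mul_mul_same B
  rw [le_iff]
  simpa only [Matrix.mul_sub, Matrix.sub_mul, Matrix.mul_smul, Matrix.smul_mul,
    Matrix.mul_one] using h

lemma trace_mul_nonneg_of_posSemidef {A P : Matrix n n 𝕜} (hA : A.PosSemidef)
    (hP : P.PosSemidef) : 0 ≤ (A * P).trace := by
  classical
  obtain ⟨S, rfl⟩ := CStarAlgebra.nonneg_iff_eq_star_mul_self.mp hP.nonneg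
  rw [star_eq_conjTranspose, ← Matrix.mul_assoc, trace_mul_comm, ← Matrix.mul_assoc]
  exact (hA.mul_mul_conjTranspose_same S).trace_nonneg

lemma trace_mul_le_trace_mul_of_le {A B P : Matrix n n 𝕜} (hAB : A ≤ B) (hP : P.PosSemidef) :
    (A * P).trace ≤ (B * P).trace := by
  rw [← sub_nonneg, ← trace_sub, ← Matrix.sub_mul]
  exact trace_mul_nonneg_of_posSemidef (le_iff.mp hAB) hP

lemma minEigenvalue_smul_trace_le [DecidableEq n] {A P : Matrix n n 𝕜} (hA : A.IsHermitian)
    (hP : P.PosSemidef) : minEigenvalue hA • P.trace ≤ (A * P).trace := by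
  simpa only [Matrix.smul_mul, Matrix.one_mul, trace_smul] using
    trace_mul_le_trace_mul_of_le (minEigenvalue_smul_one_le hA) hP

lemma minEigenvalue_mul_minEigenvalue_smul_trace_le [Fintype m] [DecidableEq m] [DecidableEq n]
    {P : Matrix m m 𝕜} {Q : Matrix n n 𝕜} (B : Matrix n m 𝕜) (hP : P.PosSemidef)
    (hQ : Q.PosSemidef) :
    (minEigenvalue hQ.isHermitian * minEigenvalue (isHermitian_conjTranspose_mul_self B)) •
      P.trace ≤ (Bᴴ * Q * B * P).trace := by
  have hB := isHermitian_conjTranspose_mul_self B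
  calc (minEigenvalue hQ.isHermitian * minEigenvalue hB) • P.trace
    _ = minEigenvalue hQ.isHermitian • minEigenvalue hB • P.trace := mul_smul ..
    _ ≤ minEigenvalue hQ.isHermitian • (Bᴴ * B * P).trace :=
      smul_le_smul_of_nonneg_left (minEigenvalue_smul_trace_le hB hP) (minEigenvalue_nonneg hQ)
    _ = (minEigenvalue hQ.isHermitian • (Bᴴ * B) * P).trace := by
      rw [Matrix.smul_mul, trace_smul]
    _ ≤ (Bᴴ * Q * B * P).trace :=
      trace_mul_le_trace_mul_of_le
        (minEigenvalue_smul_conjTranspose_mul_self_le hQ.isHermitian B) hP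

theorem fullbound_lower_general {k l : Type*} [Fintype k] [Fintype l] [Fintype m] [DecidableEq k]
    [DecidableEq l] [DecidableEq m] {P : Matrix m m 𝕜} {Q : Matrix k k 𝕜} {G : Matrix l l 𝕜}
    (Bτ : Matrix k m 𝕜) (Bc : Matrix l m 𝕜)
    (hP : P.PosSemidef) (hQ : Q.PosSemidef) (hG : G.PosSemidef) :
    (minEigenvalue hQ.isHermitian * minEigenvalue (isHermitian_conjTranspose_mul_self Bτ) +
        minEigenvalue hG.isHermitian * minEigenvalue (isHermitian_conjTranspose_mul_self Bc)) •
      P.trace ≤ ((Bτᴴ * Q * Bτ + Bcᴴ * G * Bc) * P).trace := by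
  rw [add_smul, Matrix.add_mul, trace_add]
  exact add_le_add (minEigenvalue_mul_minEigenvalue_smul_trace_le Bτ hP hQ)
    (minEigenvalue_mul_minEigenvalue_smul_trace_le Bc hP hG)

end LoewnerBounds

/-- The lower bound of Lemma 3 (fullbound):
`tr((B_τᵀ Q B_τ + B_cᵀ G B_c) P) ≥ (λ_min(Q) λ_min(B_τᵀ B_τ) + λ_min(G) λ_min(B_cᵀ B_c)) tr P`. -/
theorem fullbound_lower {m k l : ℕ} (P : Matrix (Fin m) (Fin m) ℝ)
    (Q : Matrix (Fin k) (Fin k) ℝ) (G : Matrix (Fin l) (Fin l) ℝ)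
    (Bτ : Matrix (Fin k) (Fin m) ℝ) (Bc : Matrix (Fin l) (Fin m) ℝ)
    (hP : P.PosDef) (hQ : Q.PosSemidef) (hG : G.PosSemidef)
    (hBτ : ∀ x : Fin m → ℝ, Bτ.mulVec x = 0 → x = 0)
    (hBc : ∀ x : Fin m → ℝ, Bc.mulVec x = 0 → x = 0)
    (hBτBτ : (Bτᵀ * Bτ).IsHermitian) (hBcBc : (Bcᵀ * Bc).IsHermitian) :
    ((Bτᵀ * Q * Bτ + Bcᵀ * G * Bc) * P).trace ≥
      ((⨅ i, hQ.isHermitian.eigenvalues i) * (⨅ i, hBτBτ.eigenvalues i) +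
        (⨅ i, hG.isHermitian.eigenvalues i) * (⨅ i, hBcBc.eigenvalues i)) * P.trace :=
  -- Over `ℝ`, `ᴴ` and `•` are definitionally `ᵀ` and `*`.
  fullbound_lower_general Bτ Bc hP.posSemidef hQ hG
end

section
/- Let G be a simple graph on a finite vertex type V with decidable adjacency that is connected with Fintype.card V = n, let ε : V → ℝ be strictly positive with E = diag(ε), let w : edgeSet G → ℝ be strictly positive edge weights with W = diag(w), let D be the (unoriented) incidence matrix of G indexed by V × edgeSet G, and let σ_ω, σ_v be real numbers. Then (1/2) · tr(σ_ω² • W⁻¹ + σ_v² • (Dᵀ E⁻¹ D)) = (1/2) · (σ_ω² · ∑_{e ∈ edgeSet G} 1 / w e + σ_v² · ∑_{v ∈ V} deg(v) / ε v), where deg(v) is the unweighted degree of v in G. -/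
open Matrix

/-! By cyclicity of the trace, `tr (Dᵀ E⁻¹ D) = tr (D Dᵀ E⁻¹)`. As `E⁻¹` is diagonal, only the
diagonal of `D Dᵀ` matters, and it consists of the vertex degrees. -/

theorem inv_diagonal_eq_diagonal_inv {n K : Type*} [Fintype n] [DecidableEq n] [Field K] {d : n → K}
    (hd : ∀ i, d i ≠ 0) : (diagonal d)⁻¹ = diagonal d⁻¹ := by
  refine inv_eq_right_inv ?_
  simp only [diagonal_mul_diagonal, Pi.inv_apply, mul_inv_cancel₀ (hd _), diagonal_one]

theorem trace_transpose_mul_diagonal_mul {m n R : Type*} [Fintype m] [Fintype n] [DecidableEq m]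
    [NonUnitalCommSemiring R] (B : Matrix m n R) (d : m → R) :
    (Bᵀ * diagonal d * B).trace = ∑ i, (B * Bᵀ) i i * d i := by
  rw [trace_mul_cycle]
  simp only [trace, diag_apply, mul_diagonal]

section EdgeLaplacian

variable {V : Type*} [DecidableEq V]

/-- The unoriented incidence matrix `D` of `G` with columns indexed by the edges of `G` only,
whereas the columns of `G.incMatrix R` are indexed by all of `Sym2 V`. -/
def edgeIncMatrix (R : Type*) [Zero R] [One R] (G : SimpleGraph V) [DecidableRel G.Adj] :
    Matrix V G.edgeSet R :=
  of fun v e => G.incMatrix R v e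

theorem edgeIncMatrix_mul_transpose {R : Type*} [NonAssocSemiring R] [Fintype (Sym2 V)]
    (G : SimpleGraph V) [DecidableRel G.Adj] [Fintype G.edgeSet] :
    edgeIncMatrix R G * (edgeIncMatrix R G)ᵀ = G.incMatrix R * (G.incMatrix R)ᵀ := by
  ext u v
  refine Fintype.sum_of_injective Subtype.val Subtype.val_injective _ _ (fun e he => ?_)
    fun _ => rfl
  have he_notMem : e ∉ G.incidenceSet u := fun h => he ⟨⟨e, h.1⟩, rfl⟩
  exact mul_eq_zero_of_left (G.incMatrix_of_notMem_incidenceSet he_notMem) _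

variable [Fintype V]

/-- The scaled edge Laplacian `L_{e,s}^τ = Dᵀ E⁻¹ D`, where `E = diag(ε)` holds the time scales of
the vertices. The matrix inverse is `0` as soon as some `ε v` is not invertible. -/
noncomputable def scaledEdgeLaplacian {R : Type*} [CommRing R] (G : SimpleGraph V)
    [DecidableRel G.Adj] (ε : V → R) : Matrix G.edgeSet G.edgeSet R :=
  (edgeIncMatrix R G)ᵀ * (diagonal ε)⁻¹ * edgeIncMatrix R G

variable {K : Type*} [Field K] (G : SimpleGraph V) [DecidableRel G.Adj] {ε : V → K}

theorem trace_scaledEdgeLaplacian (hε : ∀ v, ε v ≠ 0) :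
    (scaledEdgeLaplacian G ε).trace = ∑ v, (G.degree v : K) / ε v := by
  rw [scaledEdgeLaplacian, inv_diagonal_eq_diagonal_inv hε, trace_transpose_mul_diagonal_mul,
    edgeIncMatrix_mul_transpose]
  simp only [G.incMatrix_mul_transpose_diag, Pi.inv_apply, div_eq_mul_inv]

theorem tree_h2_performance_general (hε : ∀ v, ε v ≠ 0) {w : G.edgeSet → K} (hw : ∀ e, w e ≠ 0)
    (a b : K) :
    (a • (diagonal w)⁻¹ + b • scaledEdgeLaplacian G ε).trace =
      a * ∑ e, 1 / w e + b * ∑ v, (G.degree v : K) / ε v := by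
  rw [trace_add, trace_smul, trace_smul, inv_diagonal_eq_diagonal_inv hw, trace_diagonal,
    trace_scaledEdgeLaplacian G hε]
  simp only [Pi.inv_apply, one_div, smul_eq_mul]

end EdgeLaplacian

/-- Lemma 4 (tree graphs): the H₂ performance equals
`(1/2)(σ_ω² ∑_e 1/w_e + σ_v² ∑_v deg(v)/ε_v)`. -/
theorem tree_h2_performance {V : Type*} [Fintype V] [DecidableEq V]
    (G : SimpleGraph V) [DecidableRel G.Adj] (n : ℕ)
    (hconn : G.Connected) (hn : Fintype.card V = n)
    (ε : V → ℝ) (hε : ∀ v, 0 < ε v)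
    (w : G.edgeSet → ℝ) (hw : ∀ e, 0 < w e)
    (D : Matrix V G.edgeSet ℝ) (hD : D = Matrix.of fun v (e : G.edgeSet) => G.incMatrix ℝ v e)
    (σω σv : ℝ) :
    (1 / 2 : ℝ) *
        (σω ^ 2 • (Matrix.diagonal w)⁻¹ + σv ^ 2 • (Dᵀ * (Matrix.diagonal ε)⁻¹ * D)).trace =
      (1 / 2 : ℝ) *
        (σω ^ 2 * ∑ e : G.edgeSet, 1 / w e + σv ^ 2 * ∑ v : V, (G.degree v : ℝ) / ε v) := by
  subst hD
  exact congrArg ((1 / 2 : ℝ) * ·) <| tree_h2_performance_general G (fun v => (hε v).ne')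
    (fun e => (hw e).ne') (σω ^ 2) (σv ^ 2)
end
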